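/- Let Δ(τ) = e^{2πiτ}·∏_{n>0}(1−e^{2πinτ})^{24} be the discriminant cusp form of weight 12 for SL₂(ℤ). Then its completed L-values satisfy L*_Δ(1) = L*_Δ(11), L*_Δ(3) = (691/1620)·L*_Δ(11), L*_Δ(5) = (691/2520)·L*_Δ(11), L*_Δ(7) = (691/2520)·L*_Δ(11), and L*_Δ(9) = (691/1620)·L*_Δ(11), with L*_Δ(11) ≠ 0. -/

import Mathlib

open Complex UpperHalfPlane Finset

noncomputable section

/-- The zeta value `ζ(k) = ∑_{n ≥ 1} n^{-k}`. -/
def zetaVal (k : ℕ) : ℂ := ∑' n : ℕ, 1 / ((n : ℂ) + 1) ^ k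

/-- The double zeta value `ζ(r,s) = ∑_{0 < n < m} n^{-r} m^{-s}`. -/
def doubleZeta (r s : ℕ) : ℂ :=
  ∑' p : ℕ × ℕ, 1 / (((p.1 : ℂ) + 1) ^ r * ((p.1 : ℂ) + (p.2 : ℂ) + 2) ^ s)

/-- `ζ̃(k) = ζ(k)/(2πi)^k` for `k ≥ 2`, and `ζ̃(1) = 0`. -/
def zetaTilde (k : ℕ) : ℂ :=
  if 2 ≤ k then zetaVal k / (2 * (Real.pi : ℂ) * Complex.I) ^ k else 0

/-- `ζ̃(r,s) = ζ(r,s)/(2πi)^{r+s}` for `s ≥ 2`;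
`ζ̃(r,1) = -ζ̃(1,r) - ζ̃(r+1)` for `r ≥ 2`; `ζ̃(1,1) = -(1/2)ζ̃(2)`. -/
def doubleZetaTilde (r s : ℕ) : ℂ :=
  if 2 ≤ s then doubleZeta r s / (2 * (Real.pi : ℂ) * Complex.I) ^ (r + s)
  else if 2 ≤ r then
    -(doubleZeta 1 r / (2 * (Real.pi : ℂ) * Complex.I) ^ (1 + r)) - zetaTilde (r + 1)
  else -(1 / 2) * zetaTilde 2

/-- `g_h(q) = ((-1)^h/(h-1)!) ∑_{c,d>0} c^{h-1} q^{cd}`. -/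
def gSeries (h : ℕ) (q : ℂ) : ℂ :=
  ((-1 : ℂ) ^ h / (Nat.factorial (h - 1) : ℂ)) *
    ∑' p : ℕ × ℕ, ((p.1 : ℂ) + 1) ^ (h - 1) * q ^ ((p.1 + 1) * (p.2 + 1))

/-- `g_{r,s}(q) = ((-1)^{r+s}/((r-1)!(s-1)!)) ∑_{0<d₁<d₂, c₁,c₂>0} c₁^{r-1} c₂^{s-1}
q^{c₁d₁+c₂d₂}`, where we parametrize `c₁ = p.1+1`, `c₂ = p.2.1+1`, `d₁ = p.2.2.1+1`,
`d₂ = d₁ + p.2.2.2 + 1`. -/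
def gDoubleSeries (r s : ℕ) (q : ℂ) : ℂ :=
  ((-1 : ℂ) ^ (r + s) / ((Nat.factorial (r - 1) : ℂ) * (Nat.factorial (s - 1) : ℂ))) *
    ∑' p : ℕ × ℕ × ℕ × ℕ,
      ((p.1 : ℂ) + 1) ^ (r - 1) * ((p.2.1 : ℂ) + 1) ^ (s - 1) *
        q ^ ((p.1 + 1) * (p.2.2.1 + 1) + (p.2.1 + 1) * (p.2.2.1 + 1 + p.2.2.2 + 1))

/-- `g*_k(q) = ((-1)^k/k!) ∑_{c,d>0} d c^k q^{cd}`. -/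
def gStar (k : ℕ) (q : ℂ) : ℂ :=
  ((-1 : ℂ) ^ k / (Nat.factorial k : ℂ)) *
    ∑' p : ℕ × ℕ, ((p.2 : ℂ) + 1) * ((p.1 : ℂ) + 1) ^ k * q ^ ((p.1 + 1) * (p.2 + 1))

/-- `ε_{s,r}(q) = δ_{s,2} g*_r(q) - δ_{s,1} g*_{r-1}(q) + δ_{r,1}(g*_{s-1}(q) + g_r(q))
 + δ_{r,1} δ_{s,1} g_2(q)`. -/
def epsSeries (s r : ℕ) (q : ℂ) : ℂ :=
  (if s = 2 then gStar r q else 0) - (if s = 1 then gStar (r - 1) q else 0)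
    + (if r = 1 then gStar (s - 1) q + gSeries r q else 0)
    + (if r = 1 ∧ s = 1 then gSeries 2 q else 0)

/-- The divisor sum `σ_k(n) = ∑_{d ∣ n} d^k`. -/
def sigmaFn (k n : ℕ) : ℕ := ∑ d ∈ n.divisors, d ^ k

/-- The Eisenstein `q`-series `G_k(q) = ζ̃(k) + ((-1)^k/(k-1)!) ∑_{n>0} σ_{k-1}(n) q^n`. -/
def Gq (k : ℕ) (q : ℂ) : ℂ :=
  zetaTilde k + ((-1 : ℂ) ^ k / (Nat.factorial (k - 1) : ℂ)) *
    ∑' n : ℕ, (sigmaFn (k - 1) (n + 1) : ℂ) * q ^ (n + 1)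

/-- `C^p_{r,s} = δ_{r,p} + (-1)^r C(p-1,r-1) + (-1)^{p-s} C(p-1,s-1)`
(note `(-1)^{p-s} = (-1)^{p+s}`). -/
def Ccoef (r s p : ℕ) : ℤ :=
  (if r = p then 1 else 0) + (-1 : ℤ) ^ r * (Nat.choose (p - 1) (r - 1))
    + (-1 : ℤ) ^ (p + s) * (Nat.choose (p - 1) (s - 1))

/-- The double Eisenstein `q`-series
`G_{r,s}(q) = ζ̃(r,s) + ∑_{h+p=r+s} C^p_{r,s} g_h(q) ζ̃(p) + g_{r,s}(q) + (1/2)ε_{r,s}(q)`. -/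
def Gdouble (r s : ℕ) (q : ℂ) : ℂ :=
  doubleZetaTilde r s
    + ∑ p ∈ Finset.Icc 1 (r + s - 1), (Ccoef r s p : ℂ) * gSeries (r + s - p) q * zetaTilde p
    + gDoubleSeries r s q + (1 / 2) * epsSeries r s q

/-- `G^{1/2}_{r,s}(q) = G_{r,s}(q) + (1/2) G_{r+s}(q)`. -/
def Ghalf (r s : ℕ) (q : ℂ) : ℂ := Gdouble r s q + (1 / 2) * Gq (r + s) q

/-- `G'_k(q) = q (d/dq) G_k(q)`. -/
def Gderiv (k : ℕ) (q : ℂ) : ℂ := q * deriv (Gq k) q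

/-- `P_{r,s}(q) = G_r(q) G_s(q) + (δ_{r,2} + δ_{s,2}) G'_{r+s-2}(q) / (2(r+s-2))`. -/
def Pseries (r s : ℕ) (q : ℂ) : ℂ :=
  Gq r q * Gq s q +
    ((if r = 2 then (1 : ℂ) else 0) + (if s = 2 then (1 : ℂ) else 0)) *
      Gderiv (r + s - 2) q / (2 * ((r : ℂ) + (s : ℂ) - 2))

/-- The completed `L`-function `L*_f(s) = ∫₀^∞ f(it) t^{s-1} dt`. -/
def Lstar (f : UpperHalfPlane → ℂ) (s : ℝ) : ℂ :=
  ∫ t in Set.Ioi (0 : ℝ),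
    (if ht : 0 < t then f ⟨Complex.I * t, by simpa using ht⟩ else 0) * (t : ℂ) ^ ((s : ℂ) - 1)

/-- `q_{i,j}(f) = ∑_{r+s=k, r,s odd} (-1)^{(s-1)/2} L*_f(s) C(i-1,s-1)`. -/
def qcoef (k : ℕ) (f : UpperHalfPlane → ℂ) (i j : ℕ) : ℂ :=
  ∑ s ∈ Finset.Icc 1 (k - 1),
    if Odd s ∧ Odd (k - s) then
      (-1 : ℂ) ^ ((s - 1) / 2) * Lstar f (s : ℝ) * (Nat.choose (i - 1) (s - 1) : ℂ)
    else 0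

/-- `q = e^{2πiτ}`. -/
def qexp (τ : UpperHalfPlane) : ℂ := Complex.exp (2 * (Real.pi : ℂ) * Complex.I * (τ : ℂ))

/-- `f` is a normalized Hecke eigenform of weight `k`: its Fourier coefficients `a n`
satisfy `a 1 = 1`, multiplicativity on coprime arguments, and the Hecke recursion
at prime powers. -/
def IsNormalizedHeckeEigenform (k : ℕ) (f : UpperHalfPlane → ℂ) : Prop :=
  ∃ a : ℕ → ℂ,
    (∀ τ : UpperHalfPlane,
      f τ = ∑' n : ℕ, a (n + 1) * Complex.exp (2 * (Real.pi : ℂ) * Complex.I * ((n : ℂ) + 1) * (τ : ℂ))) ∧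
    a 1 = 1 ∧
    (∀ m n : ℕ, Nat.Coprime m n → a (m * n) = a m * a n) ∧
    (∀ p n : ℕ, p.Prime → 1 ≤ n →
      a (p ^ (n + 1)) = a p * a (p ^ n) - (p : ℂ) ^ (k - 1) * a (p ^ (n - 1)))

/-- The discriminant cusp form as a function on the upper half-plane:
`Δ(τ) = e^{2πiτ} ∏_{n>0} (1 - e^{2πinτ})^24`. -/
def DeltaH (τ : UpperHalfPlane) : ℂ :=
  Complex.exp (2 * (Real.pi : ℂ) * Complex.I * (τ : ℂ)) *
    ∏' n : ℕ, (1 - Complex.exp (2 * (Real.pi : ℂ) * Complex.I * ((n : ℂ) + 1) * (τ : ℂ))) ^ 24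


/-- `q = e^{2πiz}` on all of `ℂ`. -/
def qe (z : ℂ) : ℂ := Complex.exp (2 * (Real.pi : ℂ) * Complex.I * z)

/-- The product part of `Δ`. -/
def GG (q : ℂ) : ℂ := ∏' n : ℕ, (1 - q ^ (n + 1)) ^ 24

/-- `Δ` as a function on all of `ℂ`. -/
def DD (z : ℂ) : ℂ := qe z * GG (qe z)

lemma norm_qe (z : ℂ) : ‖qe z‖ = Real.exp (-(2 * Real.pi * z.im)) := by
  simp [qe, Complex.norm_exp]

lemma norm_qe_lt {z : ℂ} (hz : 0 < z.im) : ‖qe z‖ < 1 := by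
  rw [norm_qe, Real.exp_lt_one_iff]
  have := Real.pi_pos
  have : 0 < 2 * Real.pi * z.im := by positivity
  linarith

lemma GG_diff : DifferentiableOn ℂ GG (Metric.ball (0 : ℂ) 1) :=
  ModularForm.differentiableOn_tprod_one_sub_pow_pow 24

lemma DeltaH_eq (τ : UpperHalfPlane) : DeltaH τ = DD τ := by
  refine congrArg (fun x => qe (τ : ℂ) * x) (tprod_congr fun n => ?_)
  have : Complex.exp (2 * (Real.pi : ℂ) * Complex.I * ((n : ℂ) + 1) * (τ : ℂ))
      = qe τ ^ (n + 1) := by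
    rw [qe, ← Complex.exp_nat_mul]
    congr 1
    push_cast
    ring
  rw [this]

lemma disc_eq (τ : UpperHalfPlane) : ModularForm.discriminant τ = DD τ := by
  rw [ModularForm.discriminant_eq_q_prod]
  simp [DD, GG, qe, Function.Periodic.qParam, ModularForm.eta_q]

lemma DD_diffAt {z : ℂ} (hz : 0 < z.im) : DifferentiableAt ℂ DD z := by
  have h1 : DifferentiableAt ℂ qe z := by unfold qe; fun_prop
  have h2 : DifferentiableAt ℂ GG (qe z) :=
    GG_diff.differentiableAt (Metric.isOpen_ball.mem_nhds (by simpa using norm_qe_lt hz))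
  exact h1.mul (h2.comp z h1)

lemma DD_add_one (z : ℂ) : DD (z + 1) = DD z := by
  have : qe (z + 1) = qe z := by
    unfold qe
    rw [mul_add, Complex.exp_add, mul_one, Complex.exp_two_pi_mul_I, mul_one]
  simp [DD, this]

lemma DD_ne_zero {z : ℂ} (hz : 0 < z.im) : DD z ≠ 0 := by
  have := ModularForm.discriminant_ne_zero ⟨z, hz⟩
  rwa [disc_eq] at this

lemma im_neg_inv_pos {z : ℂ} (hz : 0 < z.im) : 0 < (-1 / z).im := by
  have h0 : z ≠ 0 := by rintro rfl; simp at hz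
  have : 0 < Complex.normSq z := Complex.normSq_pos.mpr h0
  rw [neg_div, one_div, Complex.neg_im, Complex.inv_im, neg_div, neg_neg]
  positivity

lemma DD_S {z : ℂ} (hz : 0 < z.im) : DD (-1 / z) = z ^ 12 * DD z := by
  have h0 : z ≠ 0 := by rintro rfl; simp at hz
  have h := congrFun ModularForm.discriminant_S_invariant ⟨z, hz⟩
  rw [ModularForm.SL_slash_apply, UpperHalfPlane.modular_S_smul, disc_eq, disc_eq,
    ModularGroup.denom_S] at h
  simp only [] at h
  have e : -1 / z = (-z)⁻¹ := by rw [neg_div, one_div, inv_neg]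
  rw [e, ← h, zpow_neg]
  have : z ^ (12 : ℤ) = z ^ 12 := by norm_cast
  rw [this]
  field_simp

lemma DD_bound {δ : ℝ} (hδ : 0 < δ) :
    ∃ C : ℝ, 0 < C ∧ ∀ z : ℂ, δ ≤ z.im → ‖DD z‖ ≤ C * Real.exp (-(2 * Real.pi * z.im)) := by
  set r := Real.exp (-(2 * Real.pi * δ)) with hr
  have hpi := Real.pi_pos
  have hr1 : r < 1 := by
    rw [hr, Real.exp_lt_one_iff]
    have : 0 < 2 * Real.pi * δ := by positivity
    linarith
  have hc : ContinuousOn GG (Metric.closedBall 0 r) :=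
    GG_diff.continuousOn.mono (Metric.closedBall_subset_ball hr1)
  obtain ⟨C, hC⟩ := (isCompact_closedBall (0 : ℂ) r).exists_bound_of_continuousOn hc
  refine ⟨max C 1, by positivity, fun z hz => ?_⟩
  rw [DD, norm_mul, norm_qe, mul_comm]
  gcongr
  refine (hC _ ?_).trans (le_max_left _ _)
  rw [mem_closedBall_zero_iff, norm_qe, hr]
  gcongr

/-- `Δ(it)` is a positive real number. -/
lemma DD_real {t : ℝ} (ht : 0 < t) : ∃ d : ℝ, 0 < d ∧ DD (Complex.I * t) = d := by
  set q : ℝ := Real.exp (-(2 * Real.pi * t)) with hq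
  have hqe : qe (Complex.I * t) = (q : ℂ) := by
    rw [qe, hq]
    push_cast
    congr 1
    linear_combination (2 * (Real.pi : ℂ) * t) * Complex.I_mul_I
  have hq1 : ‖(q : ℂ)‖ < 1 := by rw [← hqe]; exact norm_qe_lt (by simpa using ht)
  have hm : Multipliable fun n : ℕ => (1 - (q : ℂ) ^ (n + 1)) ^ 24 :=
    (ModularForm.multipliable_one_sub_pow hq1).pow 24
  have hlim := hm.hasProd.tendsto_prod_nat
  obtain ⟨p, hp0, hp⟩ : ∃ p : ℝ, 0 ≤ p ∧ GG q = p := by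
    have hre := (Complex.continuous_re.tendsto _).comp hlim
    have him := (Complex.continuous_im.tendsto _).comp hlim
    have e : ∀ n : ℕ, (∏ i ∈ Finset.range n, (1 - (q : ℂ) ^ (i + 1)) ^ 24)
        = ((∏ i ∈ Finset.range n, (1 - q ^ (i + 1)) ^ 24 : ℝ) : ℂ) := by
      intro n; push_cast; rfl
    have hre' := ge_of_tendsto' hre (b := 0) (fun n => by
      simp only [Function.comp, e, Complex.ofReal_re]
      exact Finset.prod_nonneg (fun i _ => by positivity))
    have him' := tendsto_nhds_unique him (b := (0 : ℝ)) (by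
      simp only [Function.comp_def, e, Complex.ofReal_im]
      exact tendsto_const_nhds)
    exact ⟨(GG q).re, hre', Complex.ext (by simp) (by simpa [GG] using him')⟩
  have hD : DD (Complex.I * t) = ((q * p : ℝ) : ℂ) := by
    rw [DD, hqe, hp]; push_cast; rfl
  refine ⟨q * p, ?_, hD⟩
  have hne := DD_ne_zero (z := Complex.I * t) (by simpa using ht)
  rw [hD] at hne
  have : 0 ≤ q * p := by positivity
  exact lt_of_le_of_ne this (fun h => hne (by rw [← h]; simp))

open Polynomial MeasureTheory Filter Topology

/-- The Eichler-type integral `∫_z^{i∞} Δ(w) P(w) dw`. -/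
def Iint (P : ℂ[X]) (z : ℂ) : ℂ :=
  ∫ t in Set.Ioi (0 : ℝ), DD (z + Complex.I * t) * P.eval (z + Complex.I * t) * Complex.I

lemma poly_bound (P : ℂ[X]) : ∃ C : ℝ, 0 ≤ C ∧ ∀ w : ℂ, ‖P.eval w‖ ≤ C * Real.exp ‖w‖ := by
  induction P using Polynomial.induction_on' with
  | add p q hp hq =>
    obtain ⟨C, hC, h⟩ := hp
    obtain ⟨C', hC', h'⟩ := hq
    refine ⟨C + C', by positivity, fun w => ?_⟩
    rw [eval_add, add_mul]
    exact (norm_add_le _ _).trans (add_le_add (h w) (h' w))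
  | monomial n a =>
    refine ⟨‖a‖ * n.factorial, by positivity, fun w => ?_⟩
    rw [eval_monomial, norm_mul, norm_pow, mul_assoc]
    gcongr
    have := Real.pow_div_factorial_le_exp ‖w‖ (norm_nonneg _) n
    rw [div_le_iff₀ (by positivity)] at this
    linarith

lemma im_add_I_mul (z : ℂ) (t : ℝ) : (z + Complex.I * t).im = z.im + t := by simp

lemma local_bound (P : ℂ[X]) {z₀ : ℂ} (hz : 0 < z₀.im) :
    ∃ ε : ℝ, 0 < ε ∧ ∃ C : ℝ, 0 < C ∧ ∀ z ∈ Metric.closedBall z₀ ε, 0 < z.im ∧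
      ∀ t : ℝ, 0 ≤ t →
        ‖DD (z + Complex.I * t) * P.eval (z + Complex.I * t)‖ ≤ C * Real.exp (-t) := by
  obtain ⟨C₁, hC₁, h₁⟩ := DD_bound (half_pos hz)
  obtain ⟨C₂, hC₂, h₂⟩ := poly_bound P
  refine ⟨z₀.im / 2, half_pos hz, C₁ * C₂ * Real.exp (‖z₀‖ + z₀.im / 2) + 1, by positivity,
    fun z hzb => ?_⟩
  rw [mem_closedBall_iff_norm] at hzb
  have him : z₀.im / 2 ≤ z.im := by
    have := (Complex.abs_im_le_norm (z - z₀)).trans hzb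
    rw [Complex.sub_im, abs_le] at this
    linarith [this.1]
  refine ⟨by linarith, fun t ht => ?_⟩
  have hpi := Real.pi_gt_three
  have e1 : ‖DD (z + Complex.I * t)‖ ≤ C₁ * Real.exp (-(2 * t)) := by
    refine (h₁ _ (by rw [im_add_I_mul]; linarith)).trans ?_
    refine mul_le_mul_of_nonneg_left (Real.exp_le_exp.mpr ?_) hC₁.le
    rw [im_add_I_mul]
    nlinarith
  have e2 : ‖P.eval (z + Complex.I * t)‖ ≤ C₂ * Real.exp (‖z₀‖ + z₀.im / 2 + t) := by
    refine (h₂ _).trans ?_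
    gcongr
    have a1 : ‖z + Complex.I * t‖ ≤ ‖z‖ + t := by
      refine (norm_add_le _ _).trans ?_
      simp [abs_of_nonneg ht]
    have a2 : ‖z‖ ≤ ‖z₀‖ + ‖z - z₀‖ := by
      have := norm_add_le z₀ (z - z₀)
      simpa using this
    linarith
  rw [norm_mul]
  calc _ ≤ (C₁ * Real.exp (-(2 * t))) * (C₂ * Real.exp (‖z₀‖ + z₀.im / 2 + t)) := by gcongr
    _ = C₁ * C₂ * Real.exp (‖z₀‖ + z₀.im / 2) * Real.exp (-t) := by
      rw [Real.exp_add _ t, show -t = -(2 * t) + t by ring, Real.exp_add (-(2 * t))]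
      ring
    _ ≤ _ := by
      gcongr
      linarith

lemma f_diffAt (P : ℂ[X]) {z : ℂ} (hz : 0 < z.im) :
    DifferentiableAt ℂ (fun w => DD w * P.eval w) z :=
  (DD_diffAt hz).mul P.differentiable.differentiableAt

lemma f_contOn (P : ℂ[X]) {z : ℂ} (hz : 0 < z.im) :
    ContinuousOn (fun t : ℝ => DD (z + Complex.I * t) * P.eval (z + Complex.I * t))
      (Set.Ici 0) := by
  intro t ht
  have h : 0 < (z + Complex.I * t).im := by
    rw [im_add_I_mul]; have := Set.mem_Ici.mp ht; linarith
  have := (f_diffAt P h).continuousAt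
  have h2 : ContinuousAt (fun t : ℝ => z + Complex.I * t) t := by fun_prop
  exact (ContinuousAt.comp (f := fun t : ℝ => z + Complex.I * t) this h2).continuousWithinAt

lemma exp_neg_intOn : IntegrableOn (fun t : ℝ => Real.exp (-t)) (Set.Ioi 0) :=
  integrableOn_exp_neg_Ioi 0

lemma f_intOn (P : ℂ[X]) {z : ℂ} (hz : 0 < z.im) :
    IntegrableOn (fun t : ℝ => DD (z + Complex.I * t) * P.eval (z + Complex.I * t))
      (Set.Ioi 0) := by
  obtain ⟨ε, hε, C, hC, h⟩ := local_bound P hz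
  refine Integrable.mono' (exp_neg_intOn.const_mul C)
    (((f_contOn P hz).mono Set.Ioi_subset_Ici_self).aestronglyMeasurable measurableSet_Ioi) ?_
  refine (ae_restrict_iff' measurableSet_Ioi).mpr (.of_forall fun t ht => ?_)
  exact (h z (Metric.mem_closedBall_self hε.le)).2 t (le_of_lt ht)

lemma Iint_deriv (P : ℂ[X]) {z : ℂ} (hz : 0 < z.im) :
    HasDerivAt (Iint P) (-(DD z * P.eval z)) z := by
  obtain ⟨ε, hε, C, hC, h⟩ := local_bound P hz
  set f : ℂ → ℂ := fun w => DD w * P.eval w with hf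
  have hder : ∀ x ∈ Metric.ball z (ε / 2), ∀ t : ℝ, 0 ≤ t →
      HasDerivAt f (deriv f (x + Complex.I * t)) (x + Complex.I * t) := by
    intro x hx t ht
    refine (f_diffAt P ?_).hasDerivAt
    rw [im_add_I_mul]
    have := (h x (Metric.ball_subset_closedBall (Metric.ball_subset_ball (by linarith) hx))).1
    linarith
  have hderb : ∀ x ∈ Metric.ball z (ε / 2), ∀ t : ℝ, 0 ≤ t →
      ‖deriv f (x + Complex.I * t)‖ ≤ C * Real.exp (-t) / (ε / 2) := by
    intro x hx t ht
    have hsub : ∀ y ∈ Metric.closedBall (x + Complex.I * t) (ε / 2),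
        y - Complex.I * t ∈ Metric.closedBall z ε := by
      intro y hy
      rw [mem_closedBall_iff_norm] at hy ⊢
      rw [mem_ball_iff_norm] at hx
      have := norm_add_le (y - (x + Complex.I * t)) (x - z)
      rw [show y - (x + Complex.I * t) + (x - z) = y - Complex.I * t - z by ring] at this
      linarith
    refine Complex.norm_deriv_le_of_forall_mem_sphere_norm_le (by linarith) ?_ ?_
    · refine DifferentiableOn.diffContOnCl (s := Metric.ball _ _) ?_
      rw [closure_ball _ (by linarith)]
      intro y hy
      refine (f_diffAt P ?_).differentiableWithinAt
      have := (h _ (hsub y hy)).1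
      simp at this
      linarith
    · intro y hy
      have := (h _ (hsub y (Metric.sphere_subset_closedBall hy))).2 t ht
      simpa [hf] using this
  have hmeas : ∀ x ∈ Metric.ball z (ε / 2), 0 < x.im := fun x hx =>
    (h x (Metric.ball_subset_closedBall (Metric.ball_subset_ball (by linarith) hx))).1
  have hz' : z ∈ Metric.ball z (ε / 2) := Metric.mem_ball_self (by linarith)
  have hline : ∀ t : ℝ, 0 ≤ t → HasDerivAt (fun t : ℝ => f (z + Complex.I * t))
      (deriv f (z + Complex.I * t) * Complex.I) t := by
    intro t ht
    have h2 : HasDerivAt (fun t : ℝ => z + Complex.I * (t : ℂ)) Complex.I t := by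
      have := ((Complex.ofRealCLM.hasDerivAt (x := t)).const_mul Complex.I).const_add z
      simpa using this
    exact HasDerivAt.comp t (hder z hz' t ht) h2
  have hcont : ContinuousOn (fun t : ℝ => deriv f (z + Complex.I * t) * Complex.I)
      (Set.Ioi 0) := by
    have hd : DifferentiableOn ℂ (deriv f) {w : ℂ | 0 < w.im} := by
      refine DifferentiableOn.deriv (fun w hw => (f_diffAt P hw).differentiableWithinAt) ?_
      exact isOpen_lt continuous_const Complex.continuous_im
    refine ContinuousOn.mul ?_ continuousOn_const
    refine hd.continuousOn.comp (by fun_prop) ?_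
    intro t ht
    have := Set.mem_Ioi.mp ht
    simp only [Set.mem_ofPred_eq, im_add_I_mul]
    linarith
  have key := hasDerivAt_integral_of_dominated_loc_of_deriv_le
    (μ := volume.restrict (Set.Ioi (0 : ℝ))) (x₀ := z) (s := Metric.ball z (ε / 2))
    (F := fun x (t : ℝ) => DD (x + Complex.I * t) * P.eval (x + Complex.I * t) * Complex.I)
    (F' := fun x (t : ℝ) => deriv f (x + Complex.I * t) * Complex.I)
    (bound := fun t => C * Real.exp (-t) / (ε / 2))
    (Metric.ball_mem_nhds z (by linarith))
    (by
      filter_upwards [Metric.ball_mem_nhds z (show 0 < ε / 2 by linarith)] with x hx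
      exact ((f_intOn P (hmeas x hx)).mul_const _).aestronglyMeasurable)
    ((f_intOn P hz).mul_const _)
    (hcont.aestronglyMeasurable measurableSet_Ioi)
    (by
      refine (ae_restrict_iff' measurableSet_Ioi).mpr (.of_forall fun t ht x hx => ?_)
      simpa using hderb x hx t (le_of_lt ht))
    ((exp_neg_intOn.const_mul C).div_const _)
    (by
      refine (ae_restrict_iff' measurableSet_Ioi).mpr (.of_forall fun t ht x hx => ?_)
      exact (HasDerivAt.comp_add_const x (Complex.I * t) (hder x hx t (le_of_lt ht))).mul_const _)
  have hval : ∫ t in Set.Ioi (0 : ℝ), deriv f (z + Complex.I * t) * Complex.I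
      = 0 - f (z + Complex.I * (0 : ℝ)) := by
    refine integral_Ioi_of_hasDerivAt_of_tendsto' (f := fun t : ℝ => f (z + Complex.I * t))
      (fun t ht => hline t ht) key.1 ?_
    have hexp : Tendsto (fun t : ℝ => C * Real.exp (-t)) atTop (𝓝 0) := by
      simpa using (Real.tendsto_exp_neg_atTop_nhds_zero).const_mul C
    refine squeeze_zero_norm' ?_ hexp
    filter_upwards [eventually_ge_atTop 0] with t ht
    exact (h z (Metric.mem_closedBall_self hε.le)).2 t ht
  have := key.2
  rw [hval] at this
  simpa [hf, Iint] using! this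

/-- The period `∫_0^{i∞} Δ(w) P(w) dw`. -/
def Rint (P : ℂ[X]) : ℂ :=
  ∫ t in Set.Ioi (0 : ℝ), DD (Complex.I * t) * P.eval (Complex.I * t) * Complex.I

lemma DD_axis_bound : ∃ C : ℝ, 0 < C ∧ ∀ t : ℝ, 0 < t →
    ‖DD (Complex.I * t)‖ ≤ C * Real.exp (-(2 * t)) := by
  obtain ⟨C, hC, h⟩ := DD_bound one_pos
  have hpi := Real.pi_gt_three
  refine ⟨C * (Nat.factorial 12 * Real.exp 2), by positivity, fun t ht => ?_⟩
  rcases le_or_gt 1 t with h1 | h1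
  · refine (h _ (by simpa using h1)).trans ?_
    rw [mul_assoc C]
    refine mul_le_mul_of_nonneg_left ?_ hC.le
    have e1 : Real.exp (-(2 * Real.pi * (Complex.I * (t : ℂ)).im)) ≤ Real.exp (-(2 * t)) := by
      rw [Real.exp_le_exp]
      simp
      nlinarith
    have e2 : (1 : ℝ) ≤ Nat.factorial 12 * Real.exp 2 := by
      have a : (1 : ℝ) ≤ Real.exp 2 := Real.one_le_exp (by norm_num)
      have b : (1 : ℝ) ≤ Nat.factorial 12 := by exact_mod_cast Nat.one_le_iff_ne_zero.mpr (Nat.factorial_ne_zero _)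
      nlinarith
    refine e1.trans ?_
    exact le_mul_of_one_le_left (Real.exp_pos _).le e2
  · have hti : 1 ≤ t⁻¹ := (one_le_inv₀ ht).mpr h1.le
    have ht0 : (t : ℂ) ≠ 0 := by exact_mod_cast ht.ne'
    have e : Complex.I * (t : ℂ) = -1 / (Complex.I * ((t⁻¹ : ℝ) : ℂ)) := by
      push_cast
      field_simp
      simp
    rw [e, DD_S (by simpa using ht), norm_mul, norm_pow]
    have hn : ‖Complex.I * ((t⁻¹ : ℝ) : ℂ)‖ = t⁻¹ := by
      rw [norm_mul, Complex.norm_I, one_mul, Complex.norm_real, Real.norm_of_nonneg (by positivity)]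
    rw [hn]
    have h2 := h (Complex.I * ((t⁻¹ : ℝ) : ℂ)) (by simpa using hti)
    have him : (Complex.I * ((t⁻¹ : ℝ) : ℂ)).im = t⁻¹ := by simp
    rw [him] at h2
    have h3 := Real.pow_div_factorial_le_exp t⁻¹ (by positivity) 12
    rw [div_le_iff₀ (by positivity)] at h3
    have h4 : Real.exp t⁻¹ * Real.exp (-(2 * Real.pi * t⁻¹)) ≤ 1 := by
      rw [← Real.exp_add, Real.exp_le_one_iff]
      nlinarith
    have h5 : (1 : ℝ) ≤ Real.exp 2 * Real.exp (-(2 * t)) := by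
      rw [← Real.exp_add]
      exact Real.one_le_exp (by linarith)
    calc t⁻¹ ^ 12 * ‖DD (Complex.I * ((t⁻¹ : ℝ) : ℂ))‖
        ≤ (Real.exp t⁻¹ * (Nat.factorial 12)) * (C * Real.exp (-(2 * Real.pi * t⁻¹))) := by
          gcongr
      _ = (Real.exp t⁻¹ * Real.exp (-(2 * Real.pi * t⁻¹))) * (C * Nat.factorial 12) := by ring
      _ ≤ 1 * (C * Nat.factorial 12) := by gcongr
      _ ≤ (Real.exp 2 * Real.exp (-(2 * t))) * (C * Nat.factorial 12) := by gcongr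
      _ = _ := by ring

lemma axis_contOn (P : ℂ[X]) :
    ContinuousOn (fun t : ℝ => DD (Complex.I * t) * P.eval (Complex.I * t)) (Set.Ioi 0) := by
  intro t ht
  have h : 0 < (Complex.I * (t : ℂ)).im := by simpa using ht
  have := (f_diffAt P h).continuousAt
  have h2 : ContinuousAt (fun t : ℝ => Complex.I * (t : ℂ)) t := by fun_prop
  exact (ContinuousAt.comp (f := fun t : ℝ => Complex.I * (t : ℂ)) this h2).continuousWithinAt

lemma axis_intOn (P : ℂ[X]) :
    IntegrableOn (fun t : ℝ => DD (Complex.I * t) * P.eval (Complex.I * t)) (Set.Ioi 0) := by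
  obtain ⟨C, hC, h⟩ := DD_axis_bound
  obtain ⟨C₂, hC₂, h₂⟩ := poly_bound P
  refine Integrable.mono' (exp_neg_intOn.const_mul (C * C₂))
    ((axis_contOn P).aestronglyMeasurable measurableSet_Ioi) ?_
  refine (ae_restrict_iff' measurableSet_Ioi).mpr (.of_forall fun t ht => ?_)
  have ht' : 0 < t := ht
  have hn : ‖Complex.I * (t : ℂ)‖ = t := by
    rw [norm_mul, Complex.norm_I, one_mul, Complex.norm_real, Real.norm_of_nonneg ht'.le]
  have h3 := h₂ (Complex.I * t)
  rw [hn] at h3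
  rw [norm_mul]
  calc _ ≤ (C * Real.exp (-(2 * t))) * (C₂ * Real.exp t) := by
        gcongr
        exact h t ht'
    _ = _ := by
      rw [show -t = -(2 * t) + t by ring, Real.exp_add]
      ring

lemma Rint_add (P Q : ℂ[X]) : Rint (P + Q) = Rint P + Rint Q := by
  unfold Rint
  rw [← integral_add ((axis_intOn P).mul_const _) ((axis_intOn Q).mul_const _)]
  congr 1
  ext t
  rw [eval_add]; ring

lemma Rint_C_mul (c : ℂ) (P : ℂ[X]) : Rint (C c * P) = c * Rint P := by
  unfold Rint
  rw [← integral_const_mul]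
  congr 1
  ext t
  rw [eval_mul, eval_C]; ring

lemma setInt_translate (g : ℝ → ℂ) (y : ℝ) :
    ∫ t in Set.Ioi (0 : ℝ), g (y + t) = ∫ t in Set.Ioi y, g t := by
  have := (measurePreserving_add_left volume y).setIntegral_preimage_emb
    (measurableEmbedding_addLeft y) g (Set.Ioi y)
  rw [← this]
  congr 2
  ext t
  simp

lemma Iint_axis (P : ℂ[X]) {y : ℝ} (hy : 0 < y) :
    Iint P (Complex.I * y) = Rint P -
      ∫ t in (0 : ℝ)..y, DD (Complex.I * t) * P.eval (Complex.I * t) * Complex.I := by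
  have := setInt_translate
    (fun t => DD (Complex.I * t) * P.eval (Complex.I * t) * Complex.I) y
  rw [← intervalIntegral.integral_Ioi_sub_Ioi ((axis_intOn P).mul_const _) hy.le, Rint,
    sub_sub_cancel, ← this, Iint]
  congr 1
  ext t
  push_cast
  rw [mul_add]

lemma Iint_axis_atTop (P : ℂ[X]) :
    Tendsto (fun y : ℝ => Iint P (Complex.I * y)) atTop (𝓝 0) := by
  have h := intervalIntegral_tendsto_integral_Ioi 0 ((axis_intOn P).mul_const Complex.I) tendsto_id
  have h2 := (tendsto_const_nhds (x := Rint P)).sub h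
  rw [show (∫ t in Set.Ioi (0 : ℝ), DD (Complex.I * t) * P.eval (Complex.I * t) * Complex.I)
    = Rint P from rfl, sub_self] at h2
  refine h2.congr' ?_
  filter_upwards [eventually_gt_atTop 0] with y hy
  exact (Iint_axis P hy).symm

lemma Iint_axis_zero (P : ℂ[X]) :
    Tendsto (fun y : ℝ => Iint P (Complex.I * y)) (𝓝[>] 0) (𝓝 (Rint P)) := by
  have hinteg : IntervalIntegrable
      (fun t : ℝ => DD (Complex.I * t) * P.eval (Complex.I * t) * Complex.I) volume 0 1 := by
    rw [intervalIntegrable_iff_integrableOn_Ioc_of_le zero_le_one]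
    exact IntegrableOn.mono_set ((axis_intOn P).mul_const _) Set.Ioc_subset_Ioi_self
  have hc := intervalIntegral.continuousOn_primitive_interval' hinteg Set.left_mem_uIcc 0
    Set.left_mem_uIcc
  have hc2 : Tendsto (fun y : ℝ => ∫ t in (0 : ℝ)..y,
      DD (Complex.I * t) * P.eval (Complex.I * t) * Complex.I) (𝓝[>] 0) (𝓝 0) := by
    have := hc.tendsto
    rw [intervalIntegral.integral_same, Set.uIcc_of_le zero_le_one] at this
    refine this.mono_left ?_
    rw [← nhdsWithin_Ioc_eq_nhdsGT (zero_lt_one (α := ℝ))]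
    exact nhdsWithin_mono _ Set.Ioc_subset_Icc_self
  have h2 := (tendsto_const_nhds (x := Rint P)).sub hc2
  rw [sub_zero] at h2
  refine h2.congr' ?_
  filter_upwards [self_mem_nhdsWithin] with y hy
  exact (Iint_axis P hy).symm

/-- Behaviour under `S`. -/
lemma Iint_S {P Q : ℂ[X]} (hPQ : ∀ w : ℂ, w ≠ 0 → Q.eval w = w ^ 10 * P.eval (-1 / w))
    {z : ℂ} (hz : 0 < z.im) : Iint P (-1 / z) = Iint Q z - Rint Q := by
  set Φ : ℂ → ℂ := fun z => Iint P (-1 / z) - Iint Q z with hΦ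
  have hder : ∀ w : ℂ, 0 < w.im → HasDerivAt Φ 0 w := by
    intro w hw
    have h0 : w ≠ 0 := by rintro rfl; simp at hw
    have h1 := Iint_deriv P (im_neg_inv_pos hw)
    have h2 : HasDerivAt (fun w : ℂ => -1 / w) (1 / w ^ 2) w := by
      have := (hasDerivAt_inv h0).const_mul (-1)
      convert! this using 1
      ring
    have h3 := (HasDerivAt.comp w h1 h2).sub (Iint_deriv Q hw)
    convert! h3 using 1
    rw [hPQ w h0, DD_S hw]
    field_simp
    ring
  have hconst : ∀ w : ℂ, 0 < w.im → Φ w = Φ z := by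
    intro w hw
    have hconv : Convex ℝ {w : ℂ | 0 < w.im} := convex_halfSpace_im_gt 0
    have := hconv.norm_image_sub_le_of_norm_hasDerivWithin_le (f := Φ) (f' := fun _ => 0) (C := 0)
      (fun x hx => (hder x hx).hasDerivWithinAt) (fun x _ => by simp) hz hw
    simpa [sub_eq_zero] using this
  have hlim : Tendsto (fun y : ℝ => Φ (Complex.I * y)) (𝓝[>] 0) (𝓝 (0 - Rint Q)) := by
    refine Tendsto.sub ?_ (Iint_axis_zero Q)
    refine ((Iint_axis_atTop P).comp tendsto_inv_nhdsGT_zero).congr' ?_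
    filter_upwards [self_mem_nhdsWithin] with y hy
    have hy0 : (y : ℂ) ≠ 0 := by exact_mod_cast (ne_of_gt hy)
    simp only [Function.comp]
    congr 1
    push_cast
    field_simp
    simp
  have hlim2 : Tendsto (fun y : ℝ => Φ (Complex.I * y)) (𝓝[>] 0) (𝓝 (Φ z)) := by
    refine tendsto_const_nhds.congr' ?_
    filter_upwards [self_mem_nhdsWithin] with y hy
    exact (hconst _ (by simpa using hy)).symm
  have := tendsto_nhds_unique hlim2 hlim
  simp only [hΦ] at this
  linear_combination this

lemma Rint_S {P Q : ℂ[X]} (hPQ : ∀ w : ℂ, w ≠ 0 → Q.eval w = w ^ 10 * P.eval (-1 / w)) :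
    Rint P = - Rint Q := by
  have hQP : ∀ w : ℂ, w ≠ 0 → P.eval w = w ^ 10 * Q.eval (-1 / w) := by
    intro w hw
    rw [hPQ _ (by simpa using hw)]
    have : -1 / (-1 / w) = w := by field_simp
    rw [this]
    field_simp
  have hi : 0 < Complex.I.im := by simp
  have h1 := Iint_S hPQ (im_neg_inv_pos hi)
  have h2 := Iint_S hQP hi
  have : -1 / (-1 / Complex.I) = Complex.I := by field_simp
  rw [this] at h1
  linear_combination h1 + h2

/-- Behaviour under `T`. -/
lemma Iint_T (P Q : ℂ[X]) (hPQ : ∀ w : ℂ, Q.eval w = P.eval (w + 1)) (z : ℂ) :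
    Iint P (z + 1) = Iint Q z := by
  unfold Iint
  congr 1
  ext t
  rw [hPQ, show z + 1 + Complex.I * t = z + Complex.I * t + 1 by ring, DD_add_one]

/-- The three-term relation. -/
lemma three_term : Rint (X ^ 2) + Rint ((X + 1) ^ 8) + Rint ((X + 1) ^ 2 * X ^ 8) = 0 := by
  have step : ∀ P Q Q' : ℂ[X], (∀ w : ℂ, w ≠ 0 → Q.eval w = w ^ 10 * P.eval (-1 / w)) →
      (∀ w : ℂ, Q'.eval w = Q.eval (w + 1)) → ∀ z : ℂ, 0 < z.im →
      Iint P (-1 / (z + 1)) = Iint Q' z + Rint P := by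
    intro P Q Q' h h' z hz
    rw [Iint_S h (by simpa using hz), Iint_T Q Q' h', Rint_S h]
    ring
  have a := step (X ^ 2) (X ^ 8) ((X + 1) ^ 8) (fun w hw => by simp; field_simp)
    (fun w => by simp)
  have b := step ((X + 1) ^ 8) (X ^ 2 * (X - 1) ^ 8) ((X + 1) ^ 2 * X ^ 8)
    (fun w hw => by simp; field_simp; ring) (fun w => by simp)
  have c := step ((X + 1) ^ 2 * X ^ 8) ((X - 1) ^ 2) (X ^ 2)
    (fun w hw => by simp; field_simp; ring) (fun w => by simp)
  have hi : 0 < Complex.I.im := by simp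
  have hi1 : 0 < (Complex.I + 1).im := by simp
  have p1 := im_neg_inv_pos hi1
  have p1' : 0 < (-1 / (Complex.I + 1) + 1).im := by simpa using p1
  have p2 := im_neg_inv_pos p1'
  have c1 := c _ hi
  have b1 := b _ p1
  have a1 := a _ p2
  have n1 : Complex.I + 1 ≠ 0 := fun h => by simp [h] at hi1
  have n2 : -1 / (Complex.I + 1) + 1 ≠ 0 := fun h => by rw [h] at p1'; simp at p1'
  have e : -1 / (-1 / (-1 / (Complex.I + 1) + 1) + 1) = Complex.I := by
    have : -1 / (Complex.I + 1) + 1 = Complex.I / (Complex.I + 1) := by field_simp; ring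
    rw [this]
    have : -1 / (Complex.I / (Complex.I + 1)) + 1 = -1 / Complex.I := by
      field_simp [Complex.I_ne_zero]; ring
    rw [this]
    field_simp
  rw [e] at a1
  linear_combination -(a1 + b1 + c1)

open scoped MatrixGroups ModularForm

/-- The Hecke operator `T_2` applied to `Δ`. -/
def TT (z : ℂ) : ℂ := 2048 * DD (2 * z) + (1 / 2) * (DD (z / 2) + DD ((z + 1) / 2))

lemma TT_add_one (z : ℂ) : TT (z + 1) = TT z := by
  have e1 : DD (2 * (z + 1)) = DD (2 * z) := by
    rw [show 2 * (z + 1) = 2 * z + 1 + 1 by ring, DD_add_one, DD_add_one]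
  have e2 : DD ((z + 1 + 1) / 2) = DD (z / 2) := by
    rw [show (z + 1 + 1) / 2 = z / 2 + 1 by ring, DD_add_one]
  unfold TT
  rw [e1, e2]
  ring

lemma DD_gamma {w : ℂ} (hw : 0 < w.im) : DD (w / (2 * w + 1)) = (2 * w + 1) ^ 12 * DD w := by
  have h0 : w ≠ 0 := by rintro rfl; simp at hw
  have h1 : 2 * w + 1 ≠ 0 := fun h => by
    have := congrArg Complex.im h
    simp at this
    linarith
  have e : w / (2 * w + 1) = -1 / (-1 / w - 1 - 1) := by
    have : -1 / w - 1 - 1 = -(2 * w + 1) / w := by field_simp; ring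
    rw [this]
    field_simp
  have hp := im_neg_inv_pos hw
  have hs : DD (-1 / w - 1 - 1) = DD (-1 / w) := by
    rw [← DD_add_one (-1 / w - 1 - 1), sub_add_cancel, ← DD_add_one (-1 / w - 1), sub_add_cancel]
  rw [e, DD_S (by simpa using hp), hs, DD_S hw, ← mul_assoc, ← mul_pow]
  have e2 : (-1 / w - 1 - 1) * w = -(2 * w + 1) := by field_simp; ring
  rw [e2, Even.neg_pow (by decide)]

lemma TT_S {z : ℂ} (hz : 0 < z.im) : TT (-1 / z) = z ^ 12 * TT z := by
  have h0 : z ≠ 0 := by rintro rfl; simp at hz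
  have e1 : DD (2 * (-1 / z)) = (z / 2) ^ 12 * DD (z / 2) := by
    rw [← DD_S (by simpa using hz)]
    congr 1
    field_simp
  have e2 : DD (-1 / z / 2) = (2 * z) ^ 12 * DD (2 * z) := by
    rw [← DD_S (by simpa using hz)]
    congr 1
    field_simp
  have e3 : DD ((-1 / z + 1) / 2) = z ^ 12 * DD ((z + 1) / 2) := by
    have hw : 0 < ((z - 1) / 2).im := by simpa using hz
    have := DD_gamma hw
    rw [show 2 * ((z - 1) / 2) + 1 = z by ring, ← DD_add_one ((z - 1) / 2),
      show (z - 1) / 2 + 1 = (z + 1) / 2 by ring] at this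
    rw [← this]
    congr 1
    field_simp
    ring
  unfold TT
  rw [e1, e2, e3]
  ring

lemma TT_zero : UpperHalfPlane.IsZeroAtImInfty (fun τ : UpperHalfPlane => TT τ) := by
  rw [UpperHalfPlane.isZeroAtImInfty_iff]
  intro ε hε
  obtain ⟨C, hC, h⟩ := DD_bound one_pos
  have hlim : Tendsto (fun y : ℝ => 2049 * (C * Real.exp (-y))) atTop (𝓝 0) := by
    simpa using ((Real.tendsto_exp_neg_atTop_nhds_zero).const_mul C).const_mul 2049
  obtain ⟨A, hA⟩ := (hlim.eventually (Iic_mem_nhds hε)).exists_forall_of_atTop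
  refine ⟨max A 2, fun τ hτ => ?_⟩
  have hA' := hA τ.im (le_trans (le_max_left _ _) hτ)
  have h2 : 2 ≤ τ.im := le_trans (le_max_right _ _) hτ
  have hpi := Real.pi_gt_three
  have hb : ∀ w : ℂ, τ.im / 2 ≤ w.im → ‖DD w‖ ≤ C * Real.exp (-τ.im) := by
    intro w hw
    refine (h w (by linarith)).trans ?_
    refine mul_le_mul_of_nonneg_left (Real.exp_le_exp.mpr ?_) hC.le
    nlinarith
  have b1 := hb (2 * τ) (by simp; linarith)
  have b2 := hb (τ / 2) (by simp)
  have b3 := hb ((τ + 1) / 2) (by simp)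
  have n1 : ‖TT τ‖ ≤ 2048 * ‖DD (2 * τ)‖ + (1 / 2) * (‖DD (τ / 2)‖ + ‖DD ((τ + 1) / 2)‖) := by
    unfold TT
    refine (norm_add_le _ _).trans ?_
    rw [norm_mul, norm_mul]
    have := norm_add_le (DD (τ / 2)) (DD ((τ + 1) / 2))
    norm_num
    linarith
  have : 2049 * (C * Real.exp (-τ.im)) ≤ ε := hA'
  linarith

lemma TT_slash_S : ((fun τ : UpperHalfPlane => TT τ) ∣[(12 : ℤ)] ModularGroup.S)
    = fun τ : UpperHalfPlane => TT τ := by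
  ext τ
  rw [ModularForm.SL_slash_apply, UpperHalfPlane.modular_S_smul, ModularGroup.denom_S]
  have h := TT_S τ.im_pos
  have e : -1 / (τ : ℂ) = (-(τ : ℂ))⁻¹ := by rw [neg_div, one_div, inv_neg]
  rw [e] at h
  have h0 := τ.ne_zero
  have : (τ : ℂ) ^ (12 : ℤ) = (τ : ℂ) ^ 12 := by norm_cast
  simp only [zpow_neg, this]
  rw [h]
  field_simp

lemma TT_slash_T : ((fun τ : UpperHalfPlane => TT τ) ∣[(12 : ℤ)] ModularGroup.T)
    = fun τ : UpperHalfPlane => TT τ := by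
  ext τ
  rw [ModularForm.SL_slash_apply, UpperHalfPlane.modular_T_smul]
  have h := TT_add_one τ
  rw [ModularGroup.denom_apply]
  simp [ModularGroup.T]
  rw [add_comm, h]

/-- `T_2 Δ` as a cusp form. -/
def TTform : CuspForm 𝒮ℒ 12 where
  toFun := fun τ : UpperHalfPlane => TT τ
  slash_action_eq' A hA := by
    obtain ⟨A, rfl⟩ := hA
    exact SlashInvariantForm.slash_action_generators_SL2Z TT_slash_S TT_slash_T A
  holo' := by
    rw [UpperHalfPlane.mdifferentiable_iff]
    have : DifferentiableOn ℂ TT {z | 0 < z.im} := by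
      intro z hz
      have hz' : 0 < z.im := hz
      have a1 : DifferentiableAt ℂ (fun z => DD (2 * z)) z :=
        DifferentiableAt.comp z (DD_diffAt (by simpa using hz')) (by fun_prop)
      have a2 : DifferentiableAt ℂ (fun z => DD (z / 2)) z :=
        DifferentiableAt.comp z (DD_diffAt (by simpa using hz')) (by fun_prop)
      have a3 : DifferentiableAt ℂ (fun z => DD ((z + 1) / 2)) z :=
        DifferentiableAt.comp z (f := fun z => (z + 1) / 2)
          (DD_diffAt (by simpa using hz')) (by fun_prop)
      exact ((a1.const_mul 2048).add ((a2.add a3).const_mul (1 / 2))).differentiableWithinAt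
    refine this.congr fun z hz => ?_
    simp [UpperHalfPlane.ofComplex_apply_of_im_pos hz]
  zero_at_cusps' hc := by
    rw [Subgroup.IsArithmetic.isCusp_iff_isCusp_SL2Z] at hc
    rw [OnePoint.isZeroAt_iff_forall_SL2Z hc]
    intro γ _
    rw [SlashInvariantForm.slash_action_generators_SL2Z TT_slash_S TT_slash_T]
    exact TT_zero

lemma GG_zero : GG 0 = 1 := by simp [GG]

lemma GG_deriv : HasDerivAt GG (-24) 0 := by
  have hmem : (0 : ℂ) ∈ Metric.ball (0 : ℂ) 1 := Metric.mem_ball_self one_pos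
  set K : ℂ → ℂ := fun q => ∏' n : ℕ, (1 - q ^ (n + 1)) with hK
  have hK0 : K 0 = 1 := by simp [hK]
  have hKd : DifferentiableAt ℂ K 0 :=
    ModularForm.differentiableOn_tprod_one_sub_pow.differentiableAt
      (Metric.isOpen_ball.mem_nhds hmem)
  have hld : ∀ n : ℕ, logDeriv (fun q : ℂ => 1 - q ^ (n + 1)) 0 = if n = 0 then -1 else 0 := by
    intro n
    rw [logDeriv_apply]
    have hd : HasDerivAt (fun q : ℂ => 1 - q ^ (n + 1)) (-(((n + 1 : ℕ) : ℂ) * 0 ^ n)) 0 := by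
      simpa using (hasDerivAt_pow (n + 1) (0 : ℂ)).const_sub 1
    rw [hd.deriv]
    rcases Nat.eq_zero_or_pos n with rfl | hn
    · simp
    · simp [hn.ne']
  have h := logDeriv_tprod_eq_tsum (f := fun (n : ℕ) (q : ℂ) => 1 - q ^ (n + 1))
    Metric.isOpen_ball hmem (fun n => by simp) (fun n => by fun_prop)
    (by
      refine summable_of_ne_finset_zero (s := {0}) fun n hn => ?_
      rw [hld, if_neg (by simpa using hn)])
    ModularForm.multipliableLocallyUniformlyOn_one_sub_pow (by simp)
  simp only [hld, tsum_ite_eq] at h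
  rw [logDeriv_apply] at h
  have hKd' : deriv K 0 = -1 := by
    have : deriv K 0 / K 0 = -1 := h
    rwa [hK0, div_one] at this
  have h1 : HasDerivAt K (-1) 0 := hKd' ▸ hKd.hasDerivAt
  have h2 := h1.pow 24
  have h3 : GG =ᶠ[𝓝 0] K ^ 24 := by
    filter_upwards [Metric.isOpen_ball.mem_nhds hmem] with q hq
    exact (ModularForm.multipliable_one_sub_pow (by simpa using hq)).tprod_pow 24
  have h4 := h2.congr_of_eventuallyEq h3
  rw [hK0] at h4
  convert! h4 using 1
  norm_num

/-- The Hecke eigenvalue equation `T_2 Δ = -24 Δ`. -/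
lemma hecke_two {z : ℂ} (hz : 0 < z.im) : TT z = -24 * DD z := by
  obtain ⟨c, hc⟩ := CuspForm.exists_smul_discriminant_of_weight_eq_twelve TTform
  have hc' : ∀ w : ℂ, 0 < w.im → TT w = c * DD w := by
    intro w hw
    have := DFunLike.congr_fun hc ⟨w, hw⟩
    have h2 : c * ModularForm.discriminant ⟨w, hw⟩ = TT w := this
    rw [← h2, disc_eq]
  suffices c = -24 by rw [hc' z hz, this]
  have key : ∀ p : ℂ, ‖p‖ < 1 →
      (1 / 2) * (GG p - GG (-p)) = p * (c * GG (p ^ 2) - 2048 * p ^ 2 * GG (p ^ 4)) := by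
    intro p hp
    rcases eq_or_ne p 0 with rfl | hp0
    · simp
    set w : ℂ := Complex.log p / (Real.pi * Complex.I) with hw
    have hpi0 : (Real.pi : ℂ) ≠ 0 := by exact_mod_cast Real.pi_ne_zero
    have hwl : (Real.pi : ℂ) * Complex.I * w = Complex.log p := by
      rw [hw]; field_simp [Complex.I_ne_zero]
    have hwp : Complex.exp ((Real.pi : ℂ) * Complex.I * w) = p := by
      rw [hwl, Complex.exp_log hp0]
    have him : 0 < w.im := by
      have h1 := congrArg Complex.re hwl
      rw [Complex.log_re] at h1
      simp at h1
      have h2 := Real.log_neg (norm_pos_iff.mpr hp0) hp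
      have := Real.pi_pos
      by_contra hcon
      nlinarith
    have q1 : qe (w / 2) = p := by
      rw [← hwp, qe]; congr 1; ring
    have q2 : qe w = p ^ 2 := by
      rw [← hwp, qe, ← Complex.exp_nat_mul]; congr 1; push_cast; ring
    have q3 : qe (2 * w) = p ^ 4 := by
      rw [← hwp, qe, ← Complex.exp_nat_mul]; congr 1; push_cast; ring
    have q4 : qe ((w + 1) / 2) = -p := by
      rw [← hwp, qe, show 2 * (Real.pi : ℂ) * Complex.I * ((w + 1) / 2)
        = (Real.pi : ℂ) * Complex.I * w + Real.pi * Complex.I by ring, Complex.exp_add,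
        Complex.exp_pi_mul_I]
      ring
    have := hc' w him
    simp only [TT, DD, q1, q2, q3, q4] at this
    apply mul_left_cancel₀ hp0
    linear_combination this
  have d1 : HasDerivAt (fun p : ℂ => (1 / 2) * (GG p - GG (-p))) (-24) 0 := by
    have hneg : HasDerivAt (fun p : ℂ => GG (-p)) 24 0 := by
      have h0 : HasDerivAt GG (-24) (-(0 : ℂ)) := by simpa using GG_deriv
      have := HasDerivAt.comp (0 : ℂ) h0 (hasDerivAt_neg (0 : ℂ))
      simpa [Function.comp_def] using! this
    convert! (GG_deriv.sub hneg).const_mul (1 / 2) using 1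
    norm_num
  have dG : ∀ k : ℕ, 2 ≤ k → HasDerivAt (fun p : ℂ => GG (p ^ k)) 0 0 := by
    intro k hk
    have hk0 : k ≠ 0 := by omega
    have h0 : HasDerivAt GG (-24) ((0 : ℂ) ^ k) := by simpa [hk0] using GG_deriv
    have := HasDerivAt.comp (0 : ℂ) h0 (hasDerivAt_pow k (0 : ℂ))
    simpa [Function.comp_def, show k - 1 ≠ 0 by omega] using! this
  have d2 : HasDerivAt
      (fun p : ℂ => p * (c * GG (p ^ 2) - 2048 * p ^ 2 * GG (p ^ 4))) c 0 := by
    have b := ((dG 2 le_rfl).const_mul c).sub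
      ((((hasDerivAt_pow 2 (0 : ℂ)).const_mul 2048)).mul (dG 4 (by norm_num)))
    have := (hasDerivAt_id (0 : ℂ)).mul b
    convert! this using 1
    simp [GG_zero]
  have d3 := d2.congr_of_eventuallyEq (f₁ := fun p : ℂ => (1 / 2) * (GG p - GG (-p))) (by
    filter_upwards [Metric.ball_mem_nhds (0 : ℂ) one_pos] with p hp
    exact key p (by simpa using hp))
  exact d3.unique d1

lemma Iint_scale (P : ℂ[X]) {a : ℝ} (ha : 0 < a) (z b : ℂ) :
    Iint P (a * z + b) = ∫ t in Set.Ioi (0 : ℝ),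
      a * (DD (a * (z + Complex.I * t) + b) * P.eval (a * (z + Complex.I * t) + b)
        * Complex.I) := by
  have h := integral_comp_mul_left_Ioi
    (fun t : ℝ => DD (a * z + b + Complex.I * t) * P.eval (a * z + b + Complex.I * t)
      * Complex.I) 0 ha
  rw [mul_zero] at h
  have ha0 : (a : ℂ) ≠ 0 := by exact_mod_cast ha.ne'
  rw [integral_const_mul]
  have e : (fun t : ℝ => DD (a * (z + Complex.I * t) + b) *
      P.eval (a * (z + Complex.I * t) + b) * Complex.I)
      = fun t : ℝ => DD (a * z + b + Complex.I * ((a * t : ℝ) : ℂ)) *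
        P.eval (a * z + b + Complex.I * ((a * t : ℝ) : ℂ)) * Complex.I := by
    ext t
    have : a * (z + Complex.I * t) + b = a * z + b + Complex.I * ((a * t : ℝ) : ℂ) := by
      push_cast; ring
    rw [this]
  rw [e, h, Iint, Complex.real_smul]
  push_cast
  field_simp

lemma scale_intOn (P : ℂ[X]) {a : ℝ} (ha : 0 < a) (z b : ℂ) (h : 0 < (a * z + b).im) :
    IntegrableOn (fun t : ℝ => a * (DD (a * (z + Complex.I * t) + b) *
      P.eval (a * (z + Complex.I * t) + b) * Complex.I)) (Set.Ioi 0) := by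
  have h1 := (f_intOn P h).mul_const Complex.I
  have h2 := (integrableOn_Ioi_comp_mul_left_iff
    (fun t : ℝ => DD (a * z + b + Complex.I * t) * P.eval (a * z + b + Complex.I * t)
      * Complex.I) 0 ha).mpr (by rw [mul_zero]; exact h1)
  refine (h2.const_mul (a : ℂ)).congr (.of_forall fun t => ?_)
  have : a * (z + Complex.I * t) + b = a * z + b + Complex.I * ((a * t : ℝ) : ℂ) := by
    push_cast; ring
  simp only [this]

lemma hecke_int {A B D P : ℂ[X]} (hA : ∀ w, A.eval (2 * w) = 1024 * P.eval w)
    (hB : ∀ w, B.eval (w / 2) = P.eval w) (hD : ∀ w, D.eval ((w + 1) / 2) = P.eval w)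
    {z : ℂ} (hz : 0 < z.im) :
    Iint A (2 * z) + Iint B (z / 2) + Iint D ((z + 1) / 2) = -24 * Iint P z := by
  have half : (0 : ℝ) < 1 / 2 := by norm_num
  have e1 := Iint_scale A two_pos z 0
  have e2 := Iint_scale B half z 0
  have e3 := Iint_scale D half z (1 / 2)
  have i1 := scale_intOn A two_pos z 0 (by simpa using hz)
  have i2 := scale_intOn B half z 0 (by simpa using hz)
  have i3 := scale_intOn D half z (1 / 2) (by simpa using hz)
  rw [show ((2 : ℝ) : ℂ) * z + 0 = 2 * z by push_cast; ring] at e1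
  rw [show ((1 / 2 : ℝ) : ℂ) * z + 0 = z / 2 by push_cast; ring] at e2
  rw [show ((1 / 2 : ℝ) : ℂ) * z + 1 / 2 = (z + 1) / 2 by push_cast; ring] at e3
  have j := integral_add (i1.add i2) i3
  simp only [Pi.add_apply] at j
  rw [e1, e2, e3, ← integral_add i1 i2, ← j, Iint, ← integral_const_mul]
  refine setIntegral_congr_fun measurableSet_Ioi fun t ht => ?_
  have ht' : 0 < t := ht
  have hw : 0 < (z + Complex.I * t).im := by rw [im_add_I_mul]; linarith
  have hh := hecke_two hw
  set w := z + Complex.I * t with hwdef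
  have f1 : ((2 : ℝ) : ℂ) * w + 0 = 2 * w := by push_cast; ring
  have f2 : ((1 / 2 : ℝ) : ℂ) * w + 0 = w / 2 := by push_cast; ring
  have f3 : ((1 / 2 : ℝ) : ℂ) * w + 1 / 2 = (w + 1) / 2 := by push_cast; ring
  simp only [Pi.add_apply, f1, f2, f3, hA, hB, hD]
  unfold TT at hh
  push_cast
  linear_combination (P.eval w * Complex.I) * hh

lemma hecke_period : Rint (C 1024 * X ^ 10) + Rint (X ^ 10) + Rint (X ^ 10)
    + Rint ((2 * X + 1) ^ 10) = -24 * Rint (X ^ 10) := by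
  have hi : 0 < Complex.I.im := by simp
  set z := Complex.I with hzdef
  have h0 : z ≠ 0 := Complex.I_ne_zero
  have ha := hecke_int (A := C 1024) (B := 1) (D := 1) (P := 1) (by simp) (by simp) (by simp)
    (im_neg_inv_pos hi)
  have hb := hecke_int (A := X ^ 10) (B := C 1024 * X ^ 10) (D := (2 * X - 1) ^ 10) (P := X ^ 10)
    (by intro w; simp; ring) (by intro w; simp; ring)
    (by intro w; simp; ring) hi
  have s1 := Iint_S (P := C 1024) (Q := C 1024 * X ^ 10)
    (by intro w hw; simp; ring) (z := z / 2) (by simpa using hi)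
  have s2 := Iint_S (P := 1) (Q := X ^ 10)
    (by intro w hw; simp) (z := 2 * z) (by simpa using hi)
  have s4 := Iint_S (P := 1) (Q := X ^ 10)
    (by intro w hw; simp) (z := z) hi
  have hw : 0 < ((z - 1) / 2).im := by simpa using hi
  have hw' := im_neg_inv_pos hw
  have s3 := Iint_S (P := 1) (Q := X ^ 10)
    (by intro w hw; simp) (z := -1 / ((z - 1) / 2) - 2) (by simpa using hw')
  have s5 := Iint_S (P := (X - 2) ^ 10) (Q := (2 * X + 1) ^ 10)
    (by
      intro w hw
      simp
      rw [← mul_pow, show w * (-1 / w - 2) = -(2 * w + 1) by field_simp; ring,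
        Even.neg_pow (by decide)]) hw
  have t1 := Iint_T ((X - 2) ^ 10) ((X - 1) ^ 10)
    (by intro w; simp; ring) (-1 / ((z - 1) / 2) - 1)
  have t2 := Iint_T ((X - 1) ^ 10) (X ^ 10) (by intro w; simp) (-1 / ((z - 1) / 2) - 2)
  have t3 := Iint_T ((2 * X - 1) ^ 10) ((2 * X + 1) ^ 10) (by intro w; simp; ring) ((z - 1) / 2)
  rw [show -1 / ((z - 1) / 2) - 1 + 1 = -1 / ((z - 1) / 2) by ring] at t1
  rw [show -1 / ((z - 1) / 2) - 2 + 1 = -1 / ((z - 1) / 2) - 1 by ring] at t2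
  rw [show (z - 1) / 2 + 1 = (z + 1) / 2 by ring] at t3
  have hz1 : z - 1 ≠ 0 := fun h => by rw [h] at hw; simp at hw
  have e1 : -1 / (z / 2) = 2 * (-1 / z) := by field_simp
  have e2 : -1 / (2 * z) = -1 / z / 2 := by field_simp
  have e3 : -1 / (-1 / ((z - 1) / 2) - 2) = (-1 / z + 1) / 2 := by
    have : -1 / ((z - 1) / 2) - 2 = -(2 * z) / (z - 1) := by field_simp; ring
    rw [this]
    field_simp
    ring
  rw [e1] at s1
  rw [e2] at s2
  rw [e3] at s3
  linear_combination hb - ha + s1 + s2 + s3 - t2 - t1 + s5 + 24 * s4 - t3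

/-- The real periods of `Δ`. -/
def rr (n : ℕ) : ℝ := ∫ t in Set.Ioi (0 : ℝ), (DD (Complex.I * t)).re * t ^ n

lemma DD_axis_eq {t : ℝ} (ht : 0 < t) :
    DD (Complex.I * t) = (((DD (Complex.I * t)).re : ℝ) : ℂ) := by
  obtain ⟨d, _, h⟩ := DD_real ht
  rw [h]; simp

lemma Rint_X_pow (n : ℕ) : Rint (X ^ n) = Complex.I ^ (n + 1) * rr n := by
  unfold Rint rr
  rw [← integral_complex_ofReal, ← integral_const_mul]
  refine setIntegral_congr_fun measurableSet_Ioi fun t ht => ?_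
  have := DD_axis_eq ht
  simp only [eval_pow, eval_X]
  push_cast
  rw [← this]
  ring

lemma Lstar_eq (n : ℕ) : Lstar DeltaH ((n + 1 : ℕ) : ℝ) = rr n := by
  unfold Lstar rr
  rw [← integral_complex_ofReal]
  refine setIntegral_congr_fun measurableSet_Ioi fun t ht => ?_
  have ht' : 0 < t := ht
  have := DD_axis_eq ht'
  simp only [ht', dif_pos, DeltaH_eq]
  push_cast
  rw [← this]
  congr 1
  rw [add_sub_cancel_right, Complex.cpow_natCast]

lemma rr_pos (n : ℕ) : 0 < rr n := by
  have hpos : ∀ t ∈ Set.Ioi (0 : ℝ), 0 < (DD (Complex.I * t)).re * t ^ n := by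
    intro t ht
    obtain ⟨d, hd, h⟩ := DD_real ht
    have : 0 < t := ht
    rw [h, Complex.ofReal_re]
    positivity
  have hinteg : IntegrableOn (fun t : ℝ => (DD (Complex.I * t)).re * t ^ n) (Set.Ioi 0) := by
    have h1 := ((axis_intOn (X ^ n)).mul_const ((Complex.I ^ n)⁻¹)).re
    refine IntegrableOn.congr_fun h1 (fun t ht => ?_) measurableSet_Ioi
    have hI : Complex.I ^ n ≠ 0 := pow_ne_zero _ Complex.I_ne_zero
    have e : DD (Complex.I * t) * eval (Complex.I * t) (X ^ n) * (Complex.I ^ n)⁻¹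
        = DD (Complex.I * t) * ((t ^ n : ℝ) : ℂ) := by
      rw [eval_pow, eval_X]
      push_cast
      rw [mul_pow]
      field_simp
    simp only [e]
    exact Complex.re_mul_ofReal _ _
  unfold rr
  rw [setIntegral_pos_iff_support_of_nonneg_ae
    ((ae_restrict_iff' measurableSet_Ioi).mpr (.of_forall fun t ht => (hpos t ht).le)) hinteg]
  have : (Function.support fun t : ℝ => (DD (Complex.I * t)).re * t ^ n) ∩ Set.Ioi 0
      = Set.Ioi 0 := Set.inter_eq_right.mpr fun t ht => (hpos t ht).ne'
  rw [this]
  simp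

lemma rel_symm : rr 0 = rr 10 ∧ rr 2 = rr 8 ∧ rr 4 = rr 6 := by
  have a := Rint_S (P := X ^ 0) (Q := X ^ 10) (by intro w hw; simp)
  have b := Rint_S (P := X ^ 2) (Q := X ^ 8) (by intro w hw; simp; field_simp)
  have c := Rint_S (P := X ^ 4) (Q := X ^ 6) (by intro w hw; simp; field_simp)
  simp only [Rint_X_pow] at a b c
  have a' := congrArg Complex.im a
  have b' := congrArg Complex.im b
  have c' := congrArg Complex.im c
  simp [pow_succ] at a' b' c'
  exact ⟨by linarith, by linarith, by linarith⟩

lemma rel_three : 27 * rr 2 = 42 * rr 4 := by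
  have h := three_term
  have e1 : ((X + 1) ^ 8 : ℂ[X]) = X ^ 8 + C 8 * X ^ 7 + C 28 * X ^ 6 + C 56 * X ^ 5
      + C 70 * X ^ 4 + C 56 * X ^ 3 + C 28 * X ^ 2 + C 8 * X ^ 1 + X ^ 0 := by
    simp only [map_ofNat]; ring
  have e2 : ((X + 1) ^ 2 * X ^ 8 : ℂ[X]) = X ^ 10 + C 2 * X ^ 9 + X ^ 8 := by
    simp only [map_ofNat]; ring
  rw [e1, e2] at h
  simp only [Rint_add, Rint_C_mul, Rint_X_pow] at h
  have h' := congrArg Complex.im h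
  simp [pow_succ] at h'
  obtain ⟨a, b, c⟩ := rel_symm
  linarith

lemma rel_hecke : 2073 * rr 0 = 11340 * rr 2 - 10080 * rr 4 := by
  have h := hecke_period
  have e1 : ((2 * X + 1) ^ 10 : ℂ[X]) = C 1024 * X ^ 10 + C 5120 * X ^ 9 + C 11520 * X ^ 8
      + C 15360 * X ^ 7 + C 13440 * X ^ 6 + C 8064 * X ^ 5 + C 3360 * X ^ 4 + C 960 * X ^ 3
      + C 180 * X ^ 2 + C 20 * X ^ 1 + X ^ 0 := by
    simp only [map_ofNat]; ring
  rw [e1] at h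
  simp only [Rint_add, Rint_C_mul, Rint_X_pow] at h
  have h' := congrArg Complex.im h
  simp [pow_succ] at h'
  obtain ⟨a, b, c⟩ := rel_symm
  linarith

/-- the completed `L`-values of `Δ` satisfy `L*_Δ(1) = L*_Δ(11)`,
`L*_Δ(3) = L*_Δ(9) = (691/1620) L*_Δ(11)`, `L*_Δ(5) = L*_Δ(7) = (691/2520) L*_Δ(11)`,
and `L*_Δ(11) ≠ 0`. -/
theorem delta_Lvalue_ratios :
    Lstar DeltaH 1 = Lstar DeltaH 11 ∧
    Lstar DeltaH 3 = (691 / 1620 : ℂ) * Lstar DeltaH 11 ∧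
    Lstar DeltaH 5 = (691 / 2520 : ℂ) * Lstar DeltaH 11 ∧
    Lstar DeltaH 7 = (691 / 2520 : ℂ) * Lstar DeltaH 11 ∧
    Lstar DeltaH 9 = (691 / 1620 : ℂ) * Lstar DeltaH 11 ∧
    Lstar DeltaH 11 ≠ 0 := by
  have e1 : Lstar DeltaH 1 = rr 0 := by simpa using Lstar_eq 0
  have e3 : Lstar DeltaH 3 = rr 2 := by
    have := Lstar_eq 2; norm_num at this; exact this
  have e5 : Lstar DeltaH 5 = rr 4 := by
    have := Lstar_eq 4; norm_num at this; exact this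
  have e7 : Lstar DeltaH 7 = rr 6 := by
    have := Lstar_eq 6; norm_num at this; exact this
  have e9 : Lstar DeltaH 9 = rr 8 := by
    have := Lstar_eq 8; norm_num at this; exact this
  have e11 : Lstar DeltaH 11 = rr 10 := by
    have := Lstar_eq 10; norm_num at this; exact this
  obtain ⟨a, b, c⟩ := rel_symm
  have h3 := rel_three
  have hh := rel_hecke
  have k2 : rr 2 = 691 / 1620 * rr 10 := by linarith
  have k4 : rr 4 = 691 / 2520 * rr 10 := by linarith
  rw [e1, e3, e5, e7, e9, e11, a, ← c, ← b, k2, k4]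
  push_cast
  refine ⟨rfl, rfl, rfl, rfl, rfl, ?_⟩
  exact_mod_cast (rr_pos 10).ne'
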